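/- arXiv:1009.2022 — 3 statements merged into one kernel-verified Lean document; each statement's English description precedes it below -/
import Mathlib

section
/- Let ν ≥ 2 be an integer and let L be the normalized linear-linear loss with parameters a, b ≥ 0, (a,b) ≠ (0,0). For the estimator p̂ = (ν−1)/(N−1), the risk R(p) satisfies R(p) < (a+b)(ν−1)^{ν−2} e^{−(ν−1)} / (ν−2)! for every p ∈ (0,1), and moreover lim_{p→0⁺} R(p) = (a+b)(ν−1)^{ν−2} e^{−(ν−1)} / (ν−2)!. -/
/-!
Put `k = ν - 1`. At `n = m + 1` the estimator is `k / m`, and multiplying the signed relative error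
`k / (m * p) - 1` by the probability of `n` gives the increment from `m - 1` to `m` of
`C(m, k) p ^ k (1 - p) ^ (m + 1 - k)`. This sequence starts at `0`, tends to `0`, increases up to
`M = ⌊k / p⌋` and decreases afterwards, so its positive increments and its negative increments both
have total size equal to its maximum, whence
`R(p) = (a + b) C(M, k) p ^ k (1 - p) ^ (M + 1 - k)`.

The limit is the Poisson limit theorem, as `M * p → k`. For the bound, write `s = M + 1 - k`. The
inequality `x ^ n ≤ n ^ n e ^ (x - n)` at `x = p (k + s)`, `n = k` and at `x = (1 - p) (k + s)`,
`n = s` bounds `p ^ k (1 - p) ^ s` by `k ^ k s ^ s / (k + s) ^ (k + s)`; at `x = t`, `n = t + 1` it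
is strict, and iterating it over `t = s, …, s + k - 1` gives
`s (s + 1) ⋯ (s + k - 1) s ^ s < (s + k) ^ (s + k) e ^ (-k)`.
-/

open Real Filter Set

/-- Negative binomial probability function: `f_ν(n) = C(n−1, ν−1) p^ν (1−p)^(n−ν)`. -/
noncomputable def negBinomPMF (ν : ℕ) (p : ℝ) (n : ℕ) : ℝ :=
  (Nat.choose (n - 1) (ν - 1) : ℝ) * p ^ ν * (1 - p) ^ (n - ν)

/-- Risk of the estimator `g` under loss `L` in inverse binomial sampling. -/
noncomputable def risk (ν : ℕ) (L : ℝ → ℝ) (g : ℕ → ℝ) (p : ℝ) : ℝ :=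
  ∑' n : ℕ, if ν ≤ n then negBinomPMF ν p n * L (g n / p) else 0

/-- Normalized linear-linear loss. -/
noncomputable def linLinLoss (a b x : ℝ) : ℝ :=
  if x ≤ 1 then a * (1 - x) else b * (x - 1)

open scoped Topology

section Unimodal

variable {T : ℕ → ℝ} {M : ℕ}

lemma hasSum_posPart_sub_of_unimodal (hup : ∀ j < M, T j ≤ T (j + 1))
    (hdown : ∀ j, M ≤ j → T (j + 1) ≤ T j) :
    HasSum (fun j => (T (j + 1) - T j)⁺) (T M - T 0) := by
  rw [← Finset.sum_range_sub, Finset.sum_congr rfl fun j hj =>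
    (posPart_eq_self.2 (sub_nonneg.2 (hup j (Finset.mem_range.1 hj)))).symm]
  refine hasSum_sum_of_ne_finset_zero fun j hj => ?_
  exact posPart_eq_zero.2 (sub_nonpos.2 (hdown j (by simpa using hj)))

lemma hasSum_negPart_sub_of_unimodal {l : ℝ} (hup : ∀ j < M, T j ≤ T (j + 1))
    (hdown : ∀ j, M ≤ j → T (j + 1) ≤ T j) (hlim : Tendsto T atTop (𝓝 l)) :
    HasSum (fun j => (T (j + 1) - T j)⁻) (T M - l) := by
  rw [hasSum_iff_tendsto_nat_of_nonneg fun j => negPart_nonneg _]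
  have hpos := (hasSum_posPart_sub_of_unimodal hup hdown).tendsto_sum_nat
  have hdiff := hpos.sub (hlim.sub_const (T 0))
  rw [sub_sub_sub_cancel_right] at hdiff
  refine hdiff.congr fun n => ?_
  rw [← Finset.sum_range_sub, ← Finset.sum_sub_distrib]
  refine Finset.sum_congr rfl fun j _ => ?_
  rw [sub_eq_iff_eq_add, ← sub_eq_iff_eq_add', posPart_sub_negPart]

end Unimodal

section NegativeBinomial

variable {ν k : ℕ} {p : ℝ}

lemma negBinomPMF_nonneg (hp : 0 ≤ p) (hp1 : p ≤ 1) (n : ℕ) : 0 ≤ negBinomPMF ν p n := by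
  have : 0 ≤ 1 - p := sub_nonneg.2 hp1
  unfold negBinomPMF
  positivity

lemma negBinomPMF_eq_zero_of_lt (hν : 2 ≤ ν) {n : ℕ} (hn : n < ν) : negBinomPMF ν p n = 0 := by
  rw [negBinomPMF, Nat.choose_eq_zero_of_lt (by omega), Nat.cast_zero, zero_mul, zero_mul]

lemma risk_eq_tsum (hν : 2 ≤ ν) (L : ℝ → ℝ) (g : ℕ → ℝ) (p : ℝ) :
    risk ν L g p = ∑' n, negBinomPMF ν p n * L (g n / p) := by
  refine tsum_congr fun n => ite_eq_left_iff.2 fun hn => ?_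
  rw [negBinomPMF_eq_zero_of_lt hν (not_le.1 hn), zero_mul]

lemma mul_linLinLoss (a b x : ℝ) {c : ℝ} (hc : 0 ≤ c) :
    c * linLinLoss a b x = a * (c * (x - 1))⁻ + b * (c * (x - 1))⁺ := by
  rw [linLinLoss]
  split_ifs with hx
  · have h : c * (x - 1) ≤ 0 := mul_nonpos_of_nonneg_of_nonpos hc (sub_nonpos.2 hx)
    rw [negPart_eq_neg.2 h, posPart_eq_zero.2 h]
    ring
  · have h : 0 ≤ c * (x - 1) := mul_nonneg hc (sub_nonneg.2 (not_le.1 hx).le)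
    rw [negPart_eq_zero.2 h, posPart_eq_self.2 h]
    ring

/-- The sequence whose increments are the signed relative errors of the estimator, weighted by
probability; it is `1 - p` times the probability of `k` successes in `m` Bernoulli trials. For
`m < k` the truncated exponent is harmless because the binomial coefficient vanishes. -/
noncomputable def errorPotential (k : ℕ) (p : ℝ) (m : ℕ) : ℝ :=
  (m.choose k : ℝ) * p ^ k * (1 - p) ^ (m + 1 - k)

lemma errorPotential_zero (hk : k ≠ 0) (p : ℝ) : errorPotential k p 0 = 0 := by
  rw [errorPotential, Nat.choose_eq_zero_of_lt (Nat.pos_of_ne_zero hk), Nat.cast_zero, zero_mul,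
    zero_mul]

lemma errorPotential_add_self (k : ℕ) (p : ℝ) (n : ℕ) :
    errorPotential k p (n + k) = ((n + k).choose k : ℝ) * p ^ k * (1 - p) ^ (n + 1) := by
  rw [errorPotential, show n + k + 1 - k = n + 1 by omega]

lemma choose_succ_mul_div (j k : ℕ) :
    ((j + 1).choose k : ℝ) * (k / (j + 1)) = (j + 1).choose k - j.choose k := by
  cases k with
  | zero => simp
  | succ l =>
    have absorption : ((j : ℝ) + 1) * j.choose l = (j + 1).choose (l + 1) * (l + 1) := by
      exact_mod_cast Nat.add_one_mul_choose_eq j l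
    have pascal : ((j + 1).choose (l + 1) : ℝ) = j.choose l + j.choose (l + 1) := by
      exact_mod_cast Nat.choose_succ_succ j l
    rw [mul_div_assoc', div_eq_iff (by positivity), Nat.cast_succ, ← absorption, pascal]
    ring

lemma negBinomPMF_mul_sub_one (k : ℕ) (hp : p ≠ 0) (j : ℕ) :
    negBinomPMF (k + 1) p (j + 2) * ((k : ℝ) / (j + 1) / p - 1) =
      errorPotential k p (j + 1) - errorPotential k p j := by
  have hpmf : negBinomPMF (k + 1) p (j + 2) =
      ((j + 1).choose k : ℝ) * p ^ (k + 1) * (1 - p) ^ (j + 1 - k) := by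
    rw [negBinomPMF, show j + 2 - 1 = j + 1 by omega, Nat.add_sub_cancel,
      show j + 2 - (k + 1) = j + 1 - k by omega]
  have hsucc : errorPotential k p (j + 1) =
      ((j + 1).choose k : ℝ) * p ^ k * (1 - p) ^ (j + 1 - k) * (1 - p) := by
    rcases le_or_gt k (j + 1) with hkj | hkj
    · rw [errorPotential, Nat.sub_add_comm hkj, pow_succ, mul_assoc _ ((1 - p) ^ _)]
    · simp [errorPotential, Nat.choose_eq_zero_of_lt hkj]
  calc negBinomPMF (k + 1) p (j + 2) * ((k : ℝ) / (j + 1) / p - 1)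
      = p ^ k * (1 - p) ^ (j + 1 - k) *
          (((j + 1).choose k : ℝ) * (k / (j + 1)) - p * (j + 1).choose k) := by
        rw [hpmf]
        field_simp
        ring
    _ = p ^ k * (1 - p) ^ (j + 1 - k) *
          ((j + 1).choose k - j.choose k - p * (j + 1).choose k) := by
        rw [choose_succ_mul_div]
    _ = errorPotential k p (j + 1) - errorPotential k p j := by
        rw [hsucc, errorPotential]
        ring

lemma errorPotential_le_succ (hp : 0 < p) (hp1 : p ≤ 1) {j : ℕ} (h : ((j : ℝ) + 1) * p ≤ k) :
    errorPotential k p j ≤ errorPotential k p (j + 1) := by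
  rw [← sub_nonneg, ← negBinomPMF_mul_sub_one k hp.ne']
  refine mul_nonneg (negBinomPMF_nonneg hp.le hp1 _) (sub_nonneg.2 ?_)
  rwa [div_div, one_le_div (by positivity)]

lemma errorPotential_succ_le (hp : 0 < p) (hp1 : p ≤ 1) {j : ℕ} (h : k ≤ ((j : ℝ) + 1) * p) :
    errorPotential k p (j + 1) ≤ errorPotential k p j := by
  rw [← sub_nonpos, ← negBinomPMF_mul_sub_one k hp.ne']
  refine mul_nonpos_of_nonneg_of_nonpos (negBinomPMF_nonneg hp.le hp1 _) (sub_nonpos.2 ?_)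
  rwa [div_div, div_le_one (by positivity)]

lemma tendsto_errorPotential_atTop (k : ℕ) (hp : 0 < p) (hp1 : p ≤ 1) :
    Tendsto (errorPotential k p) atTop (𝓝 0) := by
  rw [← tendsto_add_atTop_iff_nat k]
  have hnorm : ‖1 - p‖ < 1 := by
    rw [Real.norm_eq_abs, abs_lt]
    constructor <;> linarith
  have hlim := (summable_choose_mul_geometric_of_norm_lt_one k hnorm).tendsto_atTop_zero.mul_const
    (p ^ k * (1 - p))
  rw [zero_mul] at hlim
  refine hlim.congr fun n => ?_
  rw [errorPotential_add_self]
  ring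

lemma hasSum_negBinomPMF_mul_linLinLoss (hk : k ≠ 0) (a b : ℝ) (hp : 0 < p) (hp1 : p ≤ 1) :
    HasSum (fun n : ℕ => negBinomPMF (k + 1) p n * linLinLoss a b (k / ((n : ℝ) - 1) / p))
      ((a + b) * errorPotential k p ⌊k / p⌋₊) := by
  have hup : ∀ j < ⌊k / p⌋₊, errorPotential k p j ≤ errorPotential k p (j + 1) := by
    intro j hj
    refine errorPotential_le_succ hp hp1 ((le_div_iff₀ hp).1 ?_)
    exact_mod_cast (Nat.le_floor_iff (by positivity)).1 (Nat.succ_le_of_lt hj)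
  have hdown : ∀ j, ⌊k / p⌋₊ ≤ j → errorPotential k p (j + 1) ≤ errorPotential k p j := by
    intro j hj
    refine errorPotential_succ_le hp hp1 ((div_le_iff₀ hp).1 ?_)
    exact_mod_cast (Nat.lt_of_floor_lt (Nat.lt_succ_of_le hj)).le
  have hsum := ((hasSum_negPart_sub_of_unimodal hup hdown
    (tendsto_errorPotential_atTop k hp hp1)).mul_left a).add
      ((hasSum_posPart_sub_of_unimodal hup hdown).mul_left b)
  rw [errorPotential_zero hk, sub_zero, ← add_mul] at hsum
  have hinit : ∑ n ∈ Finset.range 2,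
      negBinomPMF (k + 1) p n * linLinLoss a b (k / ((n : ℝ) - 1) / p) = 0 := by
    refine Finset.sum_eq_zero fun n hn => ?_
    rw [negBinomPMF_eq_zero_of_lt (by omega) (by rw [Finset.mem_range] at hn; omega), zero_mul]
  rw [← hasSum_nat_add_iff' 2, hinit, sub_zero]
  refine hsum.congr_fun fun j => ?_
  rw [mul_linLinLoss a b _ (negBinomPMF_nonneg hp.le hp1 _), ← negBinomPMF_mul_sub_one k hp.ne',
    show ((j + 2 : ℕ) : ℝ) - 1 = j + 1 by push_cast; ring]

theorem risk_linLinLoss_eq (hk : k ≠ 0) (a b : ℝ) (hp : 0 < p) (hp1 : p ≤ 1) :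
    risk (k + 1) (linLinLoss a b) (fun n => (k : ℝ) / ((n : ℝ) - 1)) p =
      (a + b) * errorPotential k p ⌊k / p⌋₊ := by
  rw [risk_eq_tsum (by omega)]
  exact (hasSum_negBinomPMF_mul_linLinLoss hk a b hp hp1).tsum_eq

end NegativeBinomial

section Bound

lemma pow_lt_natCast_pow_mul_exp_sub {x : ℝ} (hx : 0 ≤ x) {n : ℕ} (hxn : x ≠ n) :
    x ^ n < (n : ℝ) ^ n * exp (x - n) := by
  rcases eq_or_ne n 0 with rfl | hn
  · simpa using hx.lt_of_ne' (by simpa using hxn)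
  have hn0 : (n : ℝ) ≠ 0 := Nat.cast_ne_zero.2 hn
  have htangent : x / n < exp (x / n - 1) := by
    have hne : x / n - 1 ≠ 0 := sub_ne_zero.2 fun h => hxn ((div_eq_one_iff_eq hn0).1 h)
    simpa using add_one_lt_exp hne
  calc x ^ n = (n : ℝ) ^ n * (x / n) ^ n := by rw [← mul_pow, mul_div_cancel₀ x hn0]
    _ < (n : ℝ) ^ n * exp (x / n - 1) ^ n := by gcongr
    _ = (n : ℝ) ^ n * exp (x - n) := by
      rw [← exp_nat_mul, mul_sub, mul_div_cancel₀ x hn0, mul_one]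

lemma pow_le_natCast_pow_mul_exp_sub {x : ℝ} (hx : 0 ≤ x) (n : ℕ) :
    x ^ n ≤ (n : ℝ) ^ n * exp (x - n) := by
  rcases eq_or_ne x n with rfl | hxn
  · simp
  · exact (pow_lt_natCast_pow_mul_exp_sub hx hxn).le

lemma pow_mul_one_sub_pow_mul_add_pow_le {p : ℝ} (hp : 0 ≤ p) (hp1 : p ≤ 1) (k s : ℕ) :
    p ^ k * (1 - p) ^ s * ((k : ℝ) + s) ^ (k + s) ≤ (k : ℝ) ^ k * (s : ℝ) ^ s := by
  have hq : 0 ≤ 1 - p := sub_nonneg.2 hp1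
  calc p ^ k * (1 - p) ^ s * ((k : ℝ) + s) ^ (k + s)
      = (p * (k + s)) ^ k * ((1 - p) * (k + s)) ^ s := by
        rw [mul_pow, mul_pow, pow_add]
        ring
    _ ≤ ((k : ℝ) ^ k * exp (p * (k + s) - k)) * ((s : ℝ) ^ s * exp ((1 - p) * (k + s) - s)) := by
      refine mul_le_mul ?_ ?_ (by positivity) (by positivity)
      · exact pow_le_natCast_pow_mul_exp_sub (by positivity) k
      · exact pow_le_natCast_pow_mul_exp_sub (mul_nonneg hq (by positivity)) s
    _ = (k : ℝ) ^ k * (s : ℝ) ^ s * exp (p * (k + s) - k + ((1 - p) * (k + s) - s)) := by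
      rw [exp_add]
      ring
    _ = (k : ℝ) ^ k * (s : ℝ) ^ s := by
      rw [show p * (k + s) - k + ((1 - p) * (k + s) - s) = 0 by ring, exp_zero, mul_one]

lemma ascFactorial_mul_pow_self_lt (s : ℕ) {k : ℕ} (hk : k ≠ 0) :
    (s.ascFactorial k : ℝ) * (s : ℝ) ^ s < ((s : ℝ) + k) ^ (s + k) * exp (-k) := by
  have hstep (t : ℕ) : (t : ℝ) ^ (t + 1) < ((t : ℝ) + 1) ^ (t + 1) * exp (-1) := by
    simpa using pow_lt_natCast_pow_mul_exp_sub t.cast_nonneg (n := t + 1) (by simp)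
  rw [← Nat.one_le_iff_ne_zero] at hk
  induction k, hk using Nat.le_induction with
  | base => simpa [← pow_succ', Nat.ascFactorial_succ] using hstep s
  | succ k hk ih =>
    calc ((s.ascFactorial (k + 1) : ℕ) : ℝ) * (s : ℝ) ^ s
        = ((s : ℝ) + k) * (s.ascFactorial k * (s : ℝ) ^ s) := by
          rw [Nat.ascFactorial_succ]
          push_cast
          ring
      _ ≤ ((s : ℝ) + k) * (((s : ℝ) + k) ^ (s + k) * exp (-k)) := by
          exact mul_le_mul_of_nonneg_left ih.le (by positivity)
      _ = ((s + k : ℕ) : ℝ) ^ (s + k + 1) * exp (-k) := by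
          push_cast
          ring
      _ < (((s + k : ℕ) : ℝ) + 1) ^ (s + k + 1) * exp (-1) * exp (-k) := by
          gcongr
          exact hstep (s + k)
      _ = ((s : ℝ) + (k + 1 : ℕ)) ^ (s + (k + 1)) * exp (-(k + 1 : ℕ)) := by
          rw [mul_assoc, ← exp_add]
          push_cast
          ring_nf

lemma ascFactorial_mul_pow_mul_one_sub_pow_lt {p : ℝ} (hp : 0 ≤ p) (hp1 : p ≤ 1) (s : ℕ) {k : ℕ}
    (hk : k ≠ 0) :
    (s.ascFactorial k : ℝ) * (p ^ k * (1 - p) ^ s) < (k : ℝ) ^ k * exp (-k) := by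
  have hks : (0 : ℝ) < ((k : ℝ) + s) ^ (k + s) := by positivity
  refine lt_of_mul_lt_mul_right ?_ hks.le
  calc (s.ascFactorial k : ℝ) * (p ^ k * (1 - p) ^ s) * ((k : ℝ) + s) ^ (k + s)
      = s.ascFactorial k * (p ^ k * (1 - p) ^ s * ((k : ℝ) + s) ^ (k + s)) := mul_assoc _ _ _
    _ ≤ s.ascFactorial k * ((k : ℝ) ^ k * (s : ℝ) ^ s) :=
      mul_le_mul_of_nonneg_left (pow_mul_one_sub_pow_mul_add_pow_le hp hp1 k s) (by positivity)
    _ = (k : ℝ) ^ k * (s.ascFactorial k * (s : ℝ) ^ s) := by ring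
    _ < (k : ℝ) ^ k * (((s : ℝ) + k) ^ (s + k) * exp (-k)) :=
      mul_lt_mul_of_pos_left (ascFactorial_mul_pow_self_lt s hk) (by positivity)
    _ = (k : ℝ) ^ k * exp (-k) * ((k : ℝ) + s) ^ (k + s) := by
      rw [add_comm (s : ℝ), add_comm s]
      ring

lemma errorPotential_lt {p : ℝ} (hp : 0 ≤ p) (hp1 : p ≤ 1) {k : ℕ} (hk : k ≠ 0) (m : ℕ) :
    errorPotential k p m < (k : ℝ) ^ k * exp (-k) / k.factorial := by
  rcases lt_or_ge m k with hmk | hmk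
  · rw [errorPotential, Nat.choose_eq_zero_of_lt hmk, Nat.cast_zero, zero_mul, zero_mul]
    positivity
  · obtain ⟨n, rfl⟩ := Nat.exists_eq_add_of_le' hmk
    have hfact : ((n + 1).ascFactorial k : ℝ) = k.factorial * (n + k).choose k := by
      exact_mod_cast Nat.ascFactorial_eq_factorial_mul_choose n k
    rw [errorPotential_add_self, lt_div_iff₀ (by positivity)]
    refine lt_of_eq_of_lt ?_ (ascFactorial_mul_pow_mul_one_sub_pow_lt hp hp1 (n + 1) hk)
    rw [hfact]
    ring

end Bound

section PoissonLimit

variable {α : Type*} {l : Filter α} {n : α → ℕ} {p : α → ℝ} {r : ℝ}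

lemma tendsto_one_sub_pow_exp_neg (hp : Tendsto p l (𝓝 0))
    (hnp : Tendsto (fun x => n x * p x) l (𝓝 r)) :
    Tendsto (fun x => (1 - p x) ^ n x) l (𝓝 (exp (-r))) := by
  have hq : Tendsto (fun x => 1 - p x) l (𝓝 1) := by simpa using hp.const_sub 1
  have hlower : Tendsto (fun x => exp (-(n x * p x / (1 - p x)))) l (𝓝 (exp (-r))) := by
    simpa using (hnp.div hq one_ne_zero).neg.rexp
  have hlt : ∀ᶠ x in l, 0 < 1 - p x := hq.eventually_const_lt one_pos
  refine tendsto_of_tendsto_of_tendsto_of_le_of_le' hlower hnp.neg.rexp ?_ ?_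
  · filter_upwards [hlt] with x hx
    have hlog : -(p x / (1 - p x)) ≤ log (1 - p x) := by
      convert one_sub_inv_le_log_of_pos hx using 1
      field_simp
      ring
    calc exp (-(n x * p x / (1 - p x))) = exp (-(p x / (1 - p x))) ^ n x := by
          rw [← exp_nat_mul, mul_neg, mul_div_assoc]
      _ ≤ (1 - p x) ^ n x := by
          gcongr
          rwa [← le_log_iff_exp_le hx]
  · filter_upwards [hlt] with x hx
    rw [← mul_neg, exp_nat_mul]
    gcongr
    exact one_sub_le_exp_neg (p x)

lemma tendsto_choose_mul_pow (k : ℕ) (hn : Tendsto n l atTop)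
    (hnp : Tendsto (fun x => n x * p x) l (𝓝 r)) :
    Tendsto (fun x => ((n x).choose k : ℝ) * p x ^ k) l (𝓝 (r ^ k / k.factorial)) := by
  have hequiv := ((isEquivalent_choose k).comp_tendsto hn).mul
    (Asymptotics.IsEquivalent.refl (u := fun x => p x ^ k))
  refine hequiv.symm.tendsto_nhds (((hnp.pow k).div_const _).congr fun x => ?_)
  simp only [Function.comp_apply, Pi.mul_apply]
  ring

lemma tendsto_errorPotential_poisson (k : ℕ) (hn : Tendsto n l atTop)
    (hnp : Tendsto (fun x => n x * p x) l (𝓝 r)) :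
    Tendsto (fun x => errorPotential k (p x) (n x)) l
      (𝓝 (r ^ k * exp (-r) / k.factorial)) := by
  have hp : Tendsto p l (𝓝 0) := by
    refine (hnp.div_atTop (tendsto_natCast_atTop_atTop.comp hn)).congr' ?_
    filter_upwards [hn.eventually_gt_atTop 0] with x hx
    exact mul_div_cancel_left₀ (p x) (Nat.cast_ne_zero.2 hx.ne')
  have hexponent : Tendsto (fun x => ((n x + 1 - k : ℕ) : ℝ) * p x) l (𝓝 r) := by
    have hlim : Tendsto (fun x => n x * p x + (1 - k) * p x) l (𝓝 r) := by
      simpa using hnp.add (hp.const_mul (1 - (k : ℝ)))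
    refine hlim.congr' ?_
    filter_upwards [hn.eventually_ge_atTop k] with x hx
    rw [Nat.cast_sub (by omega)]
    push_cast
    ring
  rw [mul_div_right_comm]
  exact (tendsto_choose_mul_pow k hn hnp).mul (tendsto_one_sub_pow_exp_neg hp hexponent)

end PoissonLimit

lemma tendsto_errorPotential_floor {k : ℕ} (hk : k ≠ 0) :
    Tendsto (fun p : ℝ => errorPotential k p ⌊k / p⌋₊) (𝓝[>] 0)
      (𝓝 ((k : ℝ) ^ k * exp (-k) / k.factorial)) := by
  have hk0 : (0 : ℝ) < k := Nat.cast_pos.2 (Nat.pos_of_ne_zero hk)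
  refine tendsto_errorPotential_poisson k ?_ ?_
  · exact tendsto_nat_floor_atTop.comp (tendsto_inv_nhdsGT_zero.const_mul_atTop hk0)
  · refine ((tendsto_nat_floor_mul_div_atTop hk0.le).comp tendsto_inv_nhdsGT_zero).congr
      fun p => ?_
    simp only [Function.comp_apply, div_eq_mul_inv, inv_inv]

lemma succ_pow_div_factorial (k : ℕ) :
    ((k + 1 : ℕ) : ℝ) ^ k / k.factorial =
      ((k + 1 : ℕ) : ℝ) ^ (k + 1) / (k + 1).factorial := by
  rw [Nat.factorial_succ, pow_succ, Nat.cast_mul]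
  field_simp

theorem stmt0_general (ν : ℕ) (hν : 2 ≤ ν) (a b : ℝ) (hab : 0 < a + b) :
    (∀ p ∈ Set.Ioc (0 : ℝ) 1,
        risk ν (linLinLoss a b) (fun n => ((ν : ℝ) - 1) / ((n : ℝ) - 1)) p <
          (a + b) * ((ν : ℝ) - 1) ^ (ν - 2) * exp (-((ν : ℝ) - 1)) / (ν - 2).factorial) ∧
      Tendsto (risk ν (linLinLoss a b) (fun n => ((ν : ℝ) - 1) / ((n : ℝ) - 1))) (𝓝[>] 0)
        (𝓝 ((a + b) * ((ν : ℝ) - 1) ^ (ν - 2) * exp (-((ν : ℝ) - 1)) / (ν - 2).factorial)) := by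
  obtain ⟨k, rfl⟩ := Nat.exists_eq_add_of_le' hν
  have hcast : ((k + 2 : ℕ) : ℝ) - 1 = (k + 1 : ℕ) := by push_cast; ring
  have hconst : (a + b) * ((k + 1 : ℕ) : ℝ) ^ k * exp (-(k + 1 : ℕ)) / k.factorial =
      (a + b) * (((k + 1 : ℕ) : ℝ) ^ (k + 1) * exp (-(k + 1 : ℕ)) / (k + 1).factorial) := by
    rw [mul_div_right_comm, mul_div_assoc, succ_pow_div_factorial]
    ring
  rw [hcast, Nat.add_sub_cancel, hconst]
  constructor
  · rintro p ⟨hp, hp1⟩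
    rw [risk_linLinLoss_eq k.succ_ne_zero a b hp hp1]
    exact mul_lt_mul_of_pos_left (errorPotential_lt hp.le hp1 k.succ_ne_zero _) hab
  · refine ((tendsto_errorPotential_floor k.succ_ne_zero).const_mul (a + b)).congr' ?_
    filter_upwards [Ioo_mem_nhdsGT one_pos] with p hp
    exact (risk_linLinLoss_eq k.succ_ne_zero a b hp.1 hp.2.le).symm

theorem stmt0 (ν : ℕ) (hν : 2 ≤ ν) (a b : ℝ) (ha : 0 ≤ a) (hb : 0 ≤ b)
    (hab : (a, b) ≠ (0, 0)) :
    (∀ p ∈ Set.Ioo (0 : ℝ) 1,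
        risk ν (linLinLoss a b) (fun n => ((ν : ℝ) - 1) / ((n : ℝ) - 1)) p <
          (a + b) * ((ν : ℝ) - 1) ^ (ν - 2) * Real.exp (-((ν : ℝ) - 1)) /
            (Nat.factorial (ν - 2))) ∧
      Filter.Tendsto (risk ν (linLinLoss a b) (fun n => ((ν : ℝ) - 1) / ((n : ℝ) - 1)))
        (nhdsWithin 0 (Set.Ioi 0))
        (nhds ((a + b) * ((ν : ℝ) - 1) ^ (ν - 2) * Real.exp (-((ν : ℝ) - 1)) /
          (Nat.factorial (ν - 2)))) := by
  have hpos : 0 < a + b := (add_nonneg ha hb).lt_of_ne' fun h =>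
    hab (Prod.ext_iff.2 ((add_eq_zero_iff_of_nonneg ha hb).1 h))
  exact (stmt0_general ν hν a b hpos).imp_left fun h p hp => h p (Ioo_subset_Ioc_self hp)
end

section
/- For every integer ν ≥ 2 and all a, b > 0, the value Ω_il = (ν−1)(1 + ((a+b)/(2b))(√(1 + 4ab/((ν−1)(a+b)²)) − 1)) satisfies ν−1 < Ω_il < ν. -/
open Real

/-! Write `m = ν - 1` and `x = 4ab / (m (a + b)²)`, so that `Ω_il` exceeds `m` by
`m · (a + b)/(2b) · (√(1 + x) - 1)`. For `a, b > 0` this excess is positive since `√(1 + x) > 1`.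
Strictly below its tangent line at `0`, the square root satisfies `√(1 + x) < 1 + x / 2`, and
`m · (a + b)/(2b) · x / 2 = a / (a + b)`, which is less than `1`. Since `Ω_il` is unchanged
under `(a, b) ↦ (-a, -b)`, both bounds hold as soon as `a` and `b` have the same sign. -/

lemma sqrt_one_add_lt {x : ℝ} (hx : -1 ≤ x) (hx₀ : x ≠ 0) : √(1 + x) < 1 + x / 2 := by
  have hbernoulli : (1 + x) ^ (1 / 2 : ℝ) < 1 + 1 / 2 * x :=
    rpow_one_add_lt_one_add_mul_self hx hx₀ (by norm_num) (by norm_num)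
  rwa [← sqrt_eq_rpow, one_div_mul_eq_div] at hbernoulli

/-- The quantity `Ω_il` to be located between `ν - 1` and `ν`; here `ν` may be any real number, and
`a`, `b` may have any sign. -/
noncomputable def omegaIl (ν a b : ℝ) : ℝ :=
  (ν - 1) * (1 + (a + b) / (2 * b) * (√(1 + 4 * a * b / ((ν - 1) * (a + b) ^ 2)) - 1))

lemma omegaIl_neg_neg (ν a b : ℝ) : omegaIl ν (-a) (-b) = omegaIl ν a b := by
  have hratio : (-a + -b) / (2 * -b) = (a + b) / (2 * b) := by
    rw [← neg_add, mul_neg, neg_div_neg_eq]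
  have hprod : 4 * -a * -b = 4 * a * b := by ring
  have hsq : (-a + -b) ^ 2 = (a + b) ^ 2 := by ring
  rw [omegaIl, omegaIl, hratio, hprod, hsq]

section Bounds

variable {ν a b : ℝ}

lemma sub_one_lt_omegaIl (hν : 1 < ν) (ha : 0 < a) (hb : 0 < b) : ν - 1 < omegaIl ν a b := by
  have hm : 0 < ν - 1 := sub_pos.2 hν
  have hsqrt : 1 < √(1 + 4 * a * b / ((ν - 1) * (a + b) ^ 2)) :=
    lt_sqrt_of_sq_lt (by rw [one_pow]; exact lt_add_of_pos_right 1 (by positivity))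
  have hexcess := mul_pos (show 0 < (a + b) / (2 * b) by positivity) (sub_pos.2 hsqrt)
  exact lt_mul_of_one_lt_right hm (lt_add_of_pos_right 1 hexcess)

lemma omegaIl_lt_sub_one_add_div (hν : 1 < ν) (ha : 0 < a) (hb : 0 < b) :
    omegaIl ν a b < ν - 1 + a / (a + b) := by
  have hm : 0 < ν - 1 := sub_pos.2 hν
  set x := 4 * a * b / ((ν - 1) * (a + b) ^ 2) with hx_def
  have hx : 0 < x := by positivity
  have hsqrt : √(1 + x) - 1 < x / 2 :=
    sub_left_lt_of_lt_add (sqrt_one_add_lt (by linarith) hx.ne')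
  calc omegaIl ν a b = (ν - 1) * (1 + (a + b) / (2 * b) * (√(1 + x) - 1)) := rfl
    _ < (ν - 1) * (1 + (a + b) / (2 * b) * (x / 2)) := by gcongr
    _ = ν - 1 + a / (a + b) := by
      rw [hx_def]
      field_simp
      ring

lemma omegaIl_lt (hν : 1 < ν) (ha : 0 < a) (hb : 0 < b) : omegaIl ν a b < ν := by
  have hfrac : a / (a + b) < 1 := (div_lt_one (by positivity)).2 (lt_add_of_pos_right a hb)
  linarith [omegaIl_lt_sub_one_add_div hν ha hb]

end Bounds

theorem stmt2_general {ν a b : ℝ} (hν : 1 < ν) (hab : 0 < a * b) :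
    ν - 1 < omegaIl ν a b ∧ omegaIl ν a b < ν := by
  rcases pos_and_pos_or_neg_and_neg_of_mul_pos hab with ⟨ha, hb⟩ | ⟨ha, hb⟩
  · exact ⟨sub_one_lt_omegaIl hν ha hb, omegaIl_lt hν ha hb⟩
  · rw [← omegaIl_neg_neg]
    rw [← neg_pos] at ha hb
    exact ⟨sub_one_lt_omegaIl hν ha hb, omegaIl_lt hν ha hb⟩

theorem stmt2 (ν : ℕ) (hν : 2 ≤ ν) (a b : ℝ) (ha : 0 < a) (hb : 0 < b) :
    (ν : ℝ) - 1 <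
        ((ν : ℝ) - 1) *
          (1 + (a + b) / (2 * b) *
            (Real.sqrt (1 + 4 * a * b / (((ν : ℝ) - 1) * (a + b) ^ 2)) - 1)) ∧
      ((ν : ℝ) - 1) *
          (1 + (a + b) / (2 * b) *
            (Real.sqrt (1 + 4 * a * b / (((ν : ℝ) - 1) * (a + b) ^ 2)) - 1)) <
        (ν : ℝ) :=
  stmt2_general (Nat.one_lt_cast.2 hν) (mul_pos ha hb)
end

section
/- Let ν ≥ 2 be an integer and a, b > 0. Define G(Ω) = (a+b)Ω γ(ν−1, Ω)/(ν−1) − (a+b) γ(ν, Ω) + a(1 − Ω/(ν−1)) for Ω > 0. Then G is differentiable with G′(Ω) = ((a+b) γ(ν−1, Ω) − a)/(ν−1), which is strictly increasing in Ω; consequently there is a unique Ω* > 0 satisfying γ(ν−1, Ω*) = a/(a+b), and Ω* is the unique global minimizer of G on (0,∞). -/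
/-!
The normalized incomplete gamma function increases strictly and continuously from `0` at `0` to `1`
at infinity, so it takes each value of `(0, 1)` exactly once. In the derivative of the risk the two
density terms cancel because `Γ(ν) = (ν - 1) Γ(ν - 1)`, which leaves a strictly increasing affine
function of `lowerGamma (ν - 1)`. Hence the risk is strictly convex, and a critical point of a
strictly convex function is its strict global minimizer.
-/

open Real Filter Set

/-- Normalized lower incomplete gamma function. -/
noncomputable def lowerGamma (t u : ℝ) : ℝ :=
  (∫ s in (0:ℝ)..u, s ^ (t - 1) * Real.exp (-s)) / Real.Gamma t

/-- Asymptotic risk under normalized linear-linear loss, as a function of `Ω`. -/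
noncomputable def Gll (ν : ℕ) (a b Ω : ℝ) : ℝ :=
  (a + b) * Ω * lowerGamma ((ν : ℝ) - 1) Ω / ((ν : ℝ) - 1) -
    (a + b) * lowerGamma (ν : ℝ) Ω + a * (1 - Ω / ((ν : ℝ) - 1))

theorem lt_of_strictConvexOn_of_hasDerivAt_zero {S : Set ℝ} {f : ℝ → ℝ} {x y : ℝ}
    (hf : StrictConvexOn ℝ S f) (hx : x ∈ S) (hy : y ∈ S) (hyx : y ≠ x)
    (hfx : HasDerivAt f 0 x) : f x < f y := by
  rcases hyx.lt_or_gt with h | h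
  · exact (slope_neg_iff_of_le h.le).1 (hf.slope_lt_of_hasDerivAt hy hx h hfx)
  · exact (slope_pos_iff_of_le h.le).1 (hf.lt_slope_of_hasDerivAt hx hy h hfx)

section LowerGamma

variable {t u : ℝ}

theorem lowerGamma_zero_right (t : ℝ) : lowerGamma t 0 = 0 := by
  simp [lowerGamma]

theorem intervalIntegrable_rpow_mul_exp_neg (ht : 0 < t) (x y : ℝ) :
    IntervalIntegrable (fun s : ℝ => s ^ (t - 1) * Real.exp (-s)) MeasureTheory.volume x y :=
  (intervalIntegral.intervalIntegrable_rpow' (by linarith)).mul_continuousOn (by fun_prop)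

theorem continuous_lowerGamma (ht : 0 < t) : Continuous (lowerGamma t) :=
  (intervalIntegral.continuous_primitive (intervalIntegrable_rpow_mul_exp_neg ht) 0).div_const _

theorem hasDerivAt_lowerGamma (ht : 0 < t) (hu : u ≠ 0) :
    HasDerivAt (lowerGamma t) (u ^ (t - 1) * Real.exp (-u) / Real.Gamma t) u := by
  have hmeas : Measurable fun s : ℝ => s ^ (t - 1) * Real.exp (-s) := by fun_prop
  have hcont : ContinuousAt (fun s : ℝ => s ^ (t - 1) * Real.exp (-s)) u :=
    (Real.continuousAt_rpow_const u (t - 1) (.inl hu)).mul (by fun_prop)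
  exact (intervalIntegral.integral_hasDerivAt_right (intervalIntegrable_rpow_mul_exp_neg ht 0 u)
    hmeas.stronglyMeasurable.stronglyMeasurableAtFilter hcont).div_const _

theorem strictMonoOn_lowerGamma (ht : 0 < t) : StrictMonoOn (lowerGamma t) (Ici 0) := by
  refine strictMonoOn_of_deriv_pos (convex_Ici 0) (continuous_lowerGamma ht).continuousOn ?_
  intro u hu
  have hu : 0 < u := by simpa only [interior_Ici, mem_Ioi] using hu
  rw [(hasDerivAt_lowerGamma ht hu.ne').deriv]
  exact div_pos (mul_pos (Real.rpow_pos_of_pos hu _) (Real.exp_pos _)) (Real.Gamma_pos_of_pos ht)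

theorem tendsto_lowerGamma_atTop (ht : 0 < t) : Tendsto (lowerGamma t) atTop (nhds 1) := by
  have hΓ : Tendsto (fun u => ∫ s in (0:ℝ)..u, s ^ (t - 1) * Real.exp (-s)) atTop
      (nhds (Real.Gamma t)) := by
    simpa only [Real.Gamma_eq_integral ht, mul_comm, id] using
      MeasureTheory.intervalIntegral_tendsto_integral_Ioi 0
        (Real.GammaIntegral_convergent ht) tendsto_id
  rw [← div_self (Real.Gamma_pos_of_pos ht).ne']
  exact hΓ.div_const (Real.Gamma t)

theorem existsUnique_lowerGamma_eq {c : ℝ} (ht : 0 < t) (hc : c ∈ Ioo 0 1) :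
    ∃! u : ℝ, 0 < u ∧ lowerGamma t u = c := by
  obtain ⟨M, hM, hM0⟩ : ∃ M, c < lowerGamma t M ∧ 0 ≤ M :=
    (((tendsto_lowerGamma_atTop ht).eventually_const_lt hc.2).and (eventually_ge_atTop 0)).exists
  have hcM : c ∈ Ioo (lowerGamma t 0) (lowerGamma t M) :=
    ⟨(lowerGamma_zero_right t).trans_lt hc.1, hM⟩
  obtain ⟨u, hu, rfl⟩ := intermediate_value_Ioo hM0 (continuous_lowerGamma ht).continuousOn hcM
  exact ⟨u, ⟨hu.1, rfl⟩, fun v hv =>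
    (strictMonoOn_lowerGamma ht).injOn hv.1.le hu.1.le hv.2⟩

theorem rpow_mul_exp_neg_div_Gamma_eq (ht : t ≠ 1) (hu : u ≠ 0) :
    u ^ (t - 1) * Real.exp (-u) / Real.Gamma t =
      u / (t - 1) * (u ^ (t - 1 - 1) * Real.exp (-u) / Real.Gamma (t - 1)) := by
  have ht' : t - 1 ≠ 0 := sub_ne_zero.2 ht
  have hΓ : Real.Gamma t = (t - 1) * Real.Gamma (t - 1) := by
    simpa only [sub_add_cancel] using Real.Gamma_add_one ht'
  rw [hΓ, Real.rpow_sub_one hu (t - 1)]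
  field_simp

end LowerGamma

/-- The risk `Gll` with the integer `ν` replaced by a real parameter `t`. -/
noncomputable def linLinRisk (t a b Ω : ℝ) : ℝ :=
  (a + b) * Ω * lowerGamma (t - 1) Ω / (t - 1) -
    (a + b) * lowerGamma t Ω + a * (1 - Ω / (t - 1))

section LinLinRisk

variable {t a b Ω : ℝ}

theorem hasDerivAt_linLinRisk (ht : 1 < t) (a b : ℝ) (hΩ : Ω ≠ 0) :
    HasDerivAt (linLinRisk t a b) (((a + b) * lowerGamma (t - 1) Ω - a) / (t - 1)) Ω := by
  have hpred := hasDerivAt_lowerGamma (sub_pos.2 ht) hΩ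
  have hself := hasDerivAt_lowerGamma (zero_lt_one.trans ht) hΩ
  rw [rpow_mul_exp_neg_div_Gamma_eq ht.ne' hΩ] at hself
  have hrisk := (((((hasDerivAt_id Ω).const_mul (a + b)).mul hpred).div_const (t - 1)).sub
    (hself.const_mul (a + b))).add
    ((((hasDerivAt_id Ω).div_const (t - 1)).const_sub 1).const_mul a)
  refine hrisk.congr_deriv ?_
  simp only [id]
  ring

theorem strictMonoOn_linLinRisk_deriv (ht : 1 < t) (hab : 0 < a + b) :
    StrictMonoOn (fun Ω : ℝ => ((a + b) * lowerGamma (t - 1) Ω - a) / (t - 1)) (Ioi 0) := by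
  intro x hx y hy hxy
  have hlt : lowerGamma (t - 1) x < lowerGamma (t - 1) y :=
    strictMonoOn_lowerGamma (sub_pos.2 ht) (Ioi_subset_Ici_self hx) (Ioi_subset_Ici_self hy) hxy
  exact div_lt_div_of_pos_right (sub_lt_sub_right (mul_lt_mul_of_pos_left hlt hab) a)
    (sub_pos.2 ht)

theorem strictConvexOn_linLinRisk (ht : 1 < t) (hab : 0 < a + b) :
    StrictConvexOn ℝ (Ioi 0) (linLinRisk t a b) := by
  have hderiv (x : ℝ) (hx : x ∈ Ioi 0) := hasDerivAt_linLinRisk ht a b (ne_of_gt hx)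
  refine StrictMonoOn.strictConvexOn_of_deriv (convex_Ioi 0)
    (fun x hx => (hderiv x hx).continuousAt.continuousWithinAt) ?_
  rw [interior_Ioi]
  exact (strictMonoOn_linLinRisk_deriv ht hab).congr fun x hx => (hderiv x hx).deriv.symm

theorem hasDerivAt_linLinRisk_zero_of_lowerGamma_eq (ht : 1 < t) (hab : a + b ≠ 0) (hΩ : Ω ≠ 0)
    (hcrit : lowerGamma (t - 1) Ω = a / (a + b)) : HasDerivAt (linLinRisk t a b) 0 Ω := by
  simpa only [hcrit, mul_div_cancel₀ a hab, sub_self, zero_div] using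
    hasDerivAt_linLinRisk ht a b hΩ

end LinLinRisk

theorem stmt9_general (t : ℝ) (ht : 1 < t) (a b : ℝ) (ha : 0 < a) (hb : 0 < b) :
    (∀ Ω : ℝ, 0 < Ω →
        HasDerivAt (linLinRisk t a b) (((a + b) * lowerGamma (t - 1) Ω - a) / (t - 1)) Ω) ∧
      StrictMonoOn (fun Ω : ℝ => ((a + b) * lowerGamma (t - 1) Ω - a) / (t - 1)) (Ioi 0) ∧
      (∃! Ωs : ℝ, 0 < Ωs ∧ lowerGamma (t - 1) Ωs = a / (a + b)) ∧
      ∀ Ωs : ℝ, 0 < Ωs → lowerGamma (t - 1) Ωs = a / (a + b) →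
        ∀ Ω : ℝ, 0 < Ω → Ω ≠ Ωs → linLinRisk t a b Ωs < linLinRisk t a b Ω := by
  have hab : 0 < a + b := add_pos ha hb
  have hratio : a / (a + b) ∈ Ioo 0 1 :=
    ⟨div_pos ha hab, (div_lt_one hab).2 (lt_add_of_pos_right a hb)⟩
  exact ⟨fun Ω hΩ => hasDerivAt_linLinRisk ht a b hΩ.ne', strictMonoOn_linLinRisk_deriv ht hab,
    existsUnique_lowerGamma_eq (sub_pos.2 ht) hratio, fun Ωs hΩs hcrit Ω hΩ hne =>
      lt_of_strictConvexOn_of_hasDerivAt_zero (strictConvexOn_linLinRisk ht hab) hΩs hΩ hne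
        (hasDerivAt_linLinRisk_zero_of_lowerGamma_eq ht hab.ne' hΩs.ne' hcrit)⟩

theorem stmt9 (ν : ℕ) (hν : 2 ≤ ν) (a b : ℝ) (ha : 0 < a) (hb : 0 < b) :
    (∀ Ω : ℝ, 0 < Ω →
        HasDerivAt (Gll ν a b)
          (((a + b) * lowerGamma ((ν : ℝ) - 1) Ω - a) / ((ν : ℝ) - 1)) Ω) ∧
      StrictMonoOn (fun Ω : ℝ => ((a + b) * lowerGamma ((ν : ℝ) - 1) Ω - a) / ((ν : ℝ) - 1))
        (Set.Ioi 0) ∧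
      (∃! Ωs : ℝ, 0 < Ωs ∧ lowerGamma ((ν : ℝ) - 1) Ωs = a / (a + b)) ∧
      ∀ Ωs : ℝ, 0 < Ωs → lowerGamma ((ν : ℝ) - 1) Ωs = a / (a + b) →
        ∀ Ω : ℝ, 0 < Ω → Ω ≠ Ωs → Gll ν a b Ωs < Gll ν a b Ω :=
  stmt9_general ν (Nat.one_lt_cast.2 hν) a b ha hb
end
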